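/- For every l ≥ 1 there exists a measure preserving bijection τ_l : 𝕋 → 𝕋^∞ such that for every f ∈ L¹(𝕋), setting g = f ∘ τ_l^{-1}, one has for every λ > 0 and every D ⊆ ℕ: |{x ∈ 𝕋 : ℛ_D^l f(x) > λ}| = λ({x ∈ 𝕋^∞ : ℳ_{l/D} g(x) > λ}). -/

import Mathlib

open MeasureTheory Set

/-- The circle `𝕋 = ℝ/ℤ` with its Lebesgue (Haar) probability measure. -/
abbrev Circle1 := AddCircle (1 : ℝ)

/-- The infinite torus `𝕋^∞ = ∏_{k=1}^∞ 𝕋`. -/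
abbrev Tinf := ℕ → Circle1

/-- `nthPrime k` is the `(k+1)`-st prime: `nthPrime 0 = 2 = p_1`, … -/
noncomputable def nthPrime (k : ℕ) : ℕ := Nat.nth Nat.Prime k

/-- The arc `[a, b) ⊆ 𝕋`. -/
def circleIco (a b : ℝ) : Set Circle1 := (fun r : ℝ => (r : Circle1)) '' Set.Ico a b

/-- The rectangle `B_m(j_1,…,j_d)` in `𝕋^∞`, where `m = p_1^{L_1} ⋯ p_d^{L_d}`. -/
def Rect (d : ℕ) (L j : Fin d → ℕ) : Set Tinf :=
  {x | ∀ k : Fin d,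
    x k.val ∈ circleIco ((j k : ℝ) / ((nthPrime k.val ^ L k : ℕ) : ℝ))
      (((j k : ℝ) + 1) / ((nthPrime k.val ^ L k : ℕ) : ℝ))}

/-- The Riemann set `I_l(n,t) = ⋃_{i=0}^{n-1} [t/l + i/n, (t+1)/l + i/n) ⊆ 𝕋`. -/
def RiemannSet (l n t : ℕ) : Set Circle1 :=
  ⋃ i ∈ Finset.range n,
    (fun r : ℝ => (r : Circle1)) ''
      Set.Ico ((t : ℝ) / l + (i : ℝ) / n) (((t : ℝ) + 1) / l + (i : ℝ) / n)

/-- `μ` is the product Lebesgue probability measure on `𝕋^∞`. -/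
def IsProductLebesgue (μ : Measure Tinf) : Prop :=
  IsProbabilityMeasure μ ∧
    ∀ (s : Finset ℕ) (A : ℕ → Set Circle1), (∀ i, MeasurableSet (A i)) →
      μ {x | ∀ i ∈ s, x i ∈ A i} = ∏ i ∈ s, volume (A i)

/-- The Riemann maximal function
`ℛ_D^l f(x) = sup { ⨍_{I_l(n,t)} |f| : n ∈ D, n ∣ l, x ∈ I_l(n,t) }`. -/
noncomputable def RMaxL (D : Set ℕ) (l : ℕ) (f : Circle1 → ℝ) (x : Circle1) : ENNReal :=
  ⨆ (n : ℕ) (_ : n ∈ D) (_ : n ∣ l) (t : ℕ) (_ : t < l / n) (_ : x ∈ RiemannSet l n t),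
    (volume (RiemannSet l n t))⁻¹ * ∫⁻ y in RiemannSet l n t, ‖f y‖₊ ∂volume

/-- The rectangle maximal function
`ℳ_D g(x) = sup { ⨍_B |g| dμ : B = B_m(j₁,…,j_d), m ∈ D, x ∈ B }`. -/
noncomputable def MMax (μ : Measure Tinf) (D : Set ℕ) (g : Tinf → ℝ) (x : Tinf) : ENNReal :=
  ⨆ (d : ℕ) (L : Fin d → ℕ) (j : Fin d → ℕ) (_ : (∏ k, nthPrime k.val ^ L k) ∈ D)
    (_ : ∀ k, j k < nthPrime k.val ^ L k) (_ : x ∈ Rect d L j),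
    (μ (Rect d L j))⁻¹ * ∫⁻ y in Rect d L j, ‖g y‖₊ ∂μ

/-- `l/D = {n : n divides l and l/n ∈ D}`. -/
def divSet (l : ℕ) (D : Set ℕ) : Set ℕ := {n | n ∣ l ∧ l / n ∈ D}


lemma cdf_continuous_aux (m : Measure ℝ) [IsProbabilityMeasure m] (h0 : ∀ x, m {x} = 0) :
    Continuous (ProbabilityTheory.cdf m) := by
  rw [continuous_iff_continuousAt]
  intro x
  rw [(ProbabilityTheory.monotone_cdf m).continuousAt_iff_leftLim_eq_rightLim,
    StieltjesFunction.rightLim_eq]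
  have h := h0 x
  rw [← ProbabilityTheory.measure_cdf m, StieltjesFunction.measure_singleton] at h
  have h1 := ENNReal.ofReal_eq_zero.1 h
  have h2 := (ProbabilityTheory.monotone_cdf m).leftLim_le (le_refl x)
  linarith

lemma cdf_map_aux (m : Measure ℝ) [IsProbabilityMeasure m] (h0 : ∀ x, m {x} = 0) :
    m.map (ProbabilityTheory.cdf m) = volume.restrict (Icc 0 1) := by
  have hc := cdf_continuous_aux m h0
  set F := ProbabilityTheory.cdf m with hF
  have hmono : Monotone F := ProbabilityTheory.monotone_cdf m
  have hIVT : ∀ u, 0 < u → u < 1 → ∃ x, F x = u := by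
    intro u hu hu1
    have hb := (ProbabilityTheory.tendsto_cdf_atBot m).eventually_le_const hu
    have ht := (ProbabilityTheory.tendsto_cdf_atTop m).eventually_const_le hu1
    exact mem_range_of_exists_le_of_exists_ge hc hb.exists ht.exists
  have hfin : IsProbabilityMeasure (m.map F) := Measure.isProbabilityMeasure_map hc.aemeasurable
  refine Measure.ext_of_Iic _ _ fun u => ?_
  rw [Measure.map_apply hc.measurable measurableSet_Iic, Measure.restrict_apply measurableSet_Iic]
  have hle : ∀ u, 0 ≤ u → u < 1 → m (F ⁻¹' Iic u) ≤ ENNReal.ofReal u := by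
    intro u hu hu1
    refine ENNReal.le_of_forall_pos_le_add fun ε hε _ => ?_
    obtain ⟨v, hv1, hv2⟩ : ∃ v, u < v ∧ v < min 1 (u + ε) :=
      exists_between (lt_min hu1 (by simpa using hε))
    obtain ⟨x, hx⟩ := hIVT v (by linarith) (hv2.trans_le (min_le_left _ _))
    calc m (F ⁻¹' Iic u) ≤ m (Iic x) := by
          refine measure_mono fun y hy => ?_
          by_contra hxy
          have := hmono (le_of_lt (not_le.1 hxy))
          simp only [mem_preimage, mem_Iic] at hy
          linarith
      _ = ENNReal.ofReal v := by rw [← ProbabilityTheory.ofReal_cdf, ← hF, hx]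
      _ ≤ ENNReal.ofReal (u + ε) := ENNReal.ofReal_le_ofReal (hv2.le.trans (min_le_right _ _))
      _ = _ := by rw [ENNReal.ofReal_add hu ε.coe_nonneg]; simp
  rcases lt_or_ge u 0 with hu | hu
  · have h1 : F ⁻¹' Iic u = ∅ := by
      ext y
      have := ProbabilityTheory.cdf_nonneg m y
      simp only [mem_preimage, mem_Iic, mem_empty_iff_false, iff_false, not_le]
      linarith
    have h2 : Iic u ∩ Icc 0 1 = ∅ := by
      ext y
      simp only [mem_inter_iff, mem_Iic, mem_Icc, mem_empty_iff_false, iff_false]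
      intro h; linarith [h.1, h.2.1]
    rw [h1, h2]; simp
  rcases lt_or_ge u 1 with hu1 | hu1
  · have h2 : Iic u ∩ Icc 0 1 = Icc 0 u := by
      ext y
      simp only [mem_inter_iff, mem_Iic, mem_Icc]
      constructor
      · intro h; exact ⟨h.2.1, h.1⟩
      · intro h; exact ⟨h.2, h.1, by linarith [h.2]⟩
    rw [h2, Real.volume_Icc, sub_zero]
    refine le_antisymm (hle u hu hu1) ?_
    rcases hu.eq_or_lt with rfl | hu0
    · simp
    obtain ⟨x, hx⟩ := hIVT u hu0 hu1
    rw [← hx, hF, ProbabilityTheory.ofReal_cdf]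
    exact measure_mono fun y hy => hmono hy
  · have h1 : F ⁻¹' Iic u = univ := by
      ext y
      have := ProbabilityTheory.cdf_le_one m y
      simp only [mem_preimage, mem_Iic, mem_univ, iff_true]
      linarith
    have h2 : Iic u ∩ Icc 0 1 = Icc 0 1 := by
      ext y
      simp only [mem_inter_iff, mem_Iic, mem_Icc, and_iff_right_iff_imp]
      intro h; linarith [h.2]
    rw [h1, h2]; simp

lemma exists_coord {X : Type*} [MeasurableSpace X] [StandardBorelSpace X] (ν : Measure X)
    [IsProbabilityMeasure ν] (h0 : ∀ x, ν {x} = 0) :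
    ∃ (G : X → ℝ) (V : Set ℝ), Measurable G ∧ V.Countable ∧ InjOn G (G ⁻¹' Vᶜ) ∧
      ν.map G = volume.restrict (Icc 0 1) := by
  have hφ := measurableEmbedding_embeddingReal X
  set φ := embeddingReal X
  have hprob : IsProbabilityMeasure (ν.map φ) :=
    Measure.isProbabilityMeasure_map hφ.measurable.aemeasurable
  have hm0 : ∀ x, ν.map φ {x} = 0 := by
    intro x
    rw [hφ.map_apply]
    have : (φ ⁻¹' {x}).Subsingleton := fun a ha b hb => hφ.injective (ha.trans hb.symm)
    rcases this.eq_empty_or_singleton with h | ⟨y, h⟩ <;> rw [h]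
    · simp
    · exact h0 y
  set F := ProbabilityTheory.cdf (ν.map φ) with hF
  have hmono : Monotone F := ProbabilityTheory.monotone_cdf _
  have hFm : Measurable F := hmono.measurable
  have key : ∀ x y, x < y → F x = F y → F x ∈ F '' range ((↑) : ℚ → ℝ) := by
    intro x y hxy h
    obtain ⟨q, h1, h2⟩ := exists_rat_btwn hxy
    exact ⟨q, ⟨q, rfl⟩, le_antisymm ((hmono h2.le).trans h.ge) (hmono h1.le)⟩
  refine ⟨F ∘ φ, F '' range ((↑) : ℚ → ℝ), hFm.comp hφ.measurable,
    (countable_range _).image _, ?_, ?_⟩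
  · intro x hx y hy h
    apply hφ.injective
    rcases lt_trichotomy (φ x) (φ y) with h' | h' | h'
    · exact absurd (key _ _ h' h) hx
    · exact h'
    · exact absurd (key _ _ h' h.symm) hy
  · rw [← Measure.map_map hFm hφ.measurable]
    exact cdf_map_aux _ hm0

lemma exists_null_uncountable {X : Type*} [MeasurableSpace X] [StandardBorelSpace X]
    (ν : Measure X) [IsProbabilityMeasure ν] (h0 : ∀ x, ν {x} = 0) :
    ∃ K : Set X, MeasurableSet K ∧ ν K = 0 ∧ ¬ K.Countable := by
  have hX : ¬ Countable X := by
    intro h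
    have : NullSingletonClass ν := ⟨h0⟩
    have h1 : ν univ = 0 := (Set.countable_univ (α := X)).measure_zero ν
    simp at h1
  have hR : ¬ Countable (ℝ × ℝ) := by
    intro h
    have : Countable ℝ := Function.Injective.countable (f := fun x : ℝ => (x, (0:ℝ)))
      (fun a b h => by simpa using h)
    exact Cardinal.not_countable_real (countable_univ)
  let e : X ≃ᵐ ℝ × ℝ := PolishSpace.measurableEquivOfNotCountable hX hR
  have hcount := Measure.countable_meas_pos_of_disjoint_iUnion (μ := ν)
    (As := fun c : ℝ => e ⁻¹' (Prod.fst ⁻¹' {c}))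
    (fun c => e.measurable (measurable_fst (measurableSet_singleton c))) (by
      intro c d hcd
      refine Set.disjoint_left.2 fun x hx hy => hcd ?_
      exact (show (e x).1 = c from hx).symm.trans hy)
  obtain ⟨c, hc⟩ : ∃ c, c ∉ {i : ℝ | 0 < ν (e ⁻¹' (Prod.fst ⁻¹' {i}))} := by
    by_contra! h
    exact Cardinal.not_countable_real (hcount.mono fun x _ => h x)
  refine ⟨e ⁻¹' (Prod.fst ⁻¹' {c}), e.measurable (measurable_fst (measurableSet_singleton c)),
    by simpa using hc, fun h => ?_⟩
  apply Cardinal.not_countable_real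
  have : univ ⊆ (fun x => (e x).2) '' (e ⁻¹' (Prod.fst ⁻¹' {c})) := fun y _ =>
    ⟨e.symm (c, y), by simp, by simp⟩
  exact (h.image _).mono this

lemma equiv_of_range {A B Z : Type*} [MeasurableSpace A] [MeasurableSpace B] [MeasurableSpace Z]
    {f : A → Z} {g : B → Z} (hf : MeasurableEmbedding f) (hg : MeasurableEmbedding g)
    (h : range f = range g) : ∃ e : A ≃ᵐ B, ∀ a, g (e a) = f a := by
  have h1 : ∀ a, ∃ b, g b = f a := fun a => by
    have : f a ∈ range g := h ▸ mem_range_self a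
    exact this
  have h2 : ∀ b, ∃ a, f a = g b := fun b => by
    have : g b ∈ range f := h ▸ mem_range_self b
    exact this
  choose u hu using h1
  choose v hv using h2
  refine ⟨⟨⟨u, v, fun a => hf.injective (by rw [hv, hu]), fun b => hg.injective (by rw [hu, hv])⟩,
    ?_, ?_⟩, hu⟩
  · exact hg.measurable_comp_iff.1 (by convert hf.measurable using 1; exact funext hu)
  · exact hf.measurable_comp_iff.1 (by convert hg.measurable using 1; exact funext hv)

lemma exists_iso {X Y : Type*} [MeasurableSpace X] [StandardBorelSpace X]
    [MeasurableSpace Y] [StandardBorelSpace Y] (μ : Measure X) (ν : Measure Y)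
    [IsProbabilityMeasure μ] [IsProbabilityMeasure ν] (h0 : ∀ x, μ {x} = 0)
    (k0 : ∀ x, ν {x} = 0) : ∃ e : X ≃ᵐ Y, MeasurePreserving e μ ν := by
  classical
  obtain ⟨G, V, hG, hV, hGi, hGm⟩ := exists_coord μ h0
  obtain ⟨H, W, hH, hW, hHi, hHm⟩ := exists_coord ν k0
  obtain ⟨K, hK, hK0, hKc⟩ := exists_null_uncountable μ h0
  obtain ⟨J, hJ, hJ0, hJc⟩ := exists_null_uncountable ν k0
  set X1 := G ⁻¹' Vᶜ \ K with hX1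
  set Y1 := H ⁻¹' Wᶜ \ J with hY1
  have hX1m : MeasurableSet X1 := (hG hV.measurableSet.compl).diff hK
  have hY1m : MeasurableSet Y1 := (hH hW.measurableSet.compl).diff hJ
  have hGi1 : InjOn G X1 := hGi.mono sdiff_subset
  have hHi1 : InjOn H Y1 := hHi.mono sdiff_subset
  have imG : ∀ A, MeasurableSet A → A ⊆ X1 → MeasurableSet (G '' A) := fun A hA hAs =>
    hA.image_of_measurable_injOn hG (hGi1.mono hAs)
  have imH : ∀ A, MeasurableSet A → A ⊆ Y1 → MeasurableSet (H '' A) := fun A hA hAs =>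
    hA.image_of_measurable_injOn hH (hHi1.mono hAs)
  have evG : ∀ T, MeasurableSet T → μ (G ⁻¹' T) = volume.restrict (Icc 0 1) T := fun T hT => by
    rw [← hGm, Measure.map_apply hG hT]
  have evH : ∀ T, MeasurableSet T → ν (H ⁻¹' T) = volume.restrict (Icc 0 1) T := fun T hT => by
    rw [← hHm, Measure.map_apply hH hT]
  have nX1 : μ X1ᶜ = 0 := by
    have : X1ᶜ ⊆ G ⁻¹' V ∪ K := fun x hx => by
      by_contra h
      simp only [mem_union, not_or] at h
      exact hx ⟨h.1, h.2⟩
    refine measure_mono_null this (measure_union_null ?_ hK0)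
    rw [evG _ hV.measurableSet]
    exact hV.measure_zero _
  have nY1 : ν Y1ᶜ = 0 := by
    have : Y1ᶜ ⊆ H ⁻¹' W ∪ J := fun x hx => by
      by_contra h
      simp only [mem_union, not_or] at h
      exact hx ⟨h.1, h.2⟩
    refine measure_mono_null this (measure_union_null ?_ hJ0)
    rw [evH _ hW.measurableSet]
    exact hW.measure_zero _
  set S := G '' X1 ∩ H '' Y1 with hS
  have hSm : MeasurableSet S := (imG _ hX1m le_rfl).inter (imH _ hY1m le_rfl)
  have nS : volume.restrict (Icc (0:ℝ) 1) Sᶜ = 0 := by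
    rw [hS, compl_inter]
    refine measure_union_null ?_ ?_
    · rw [← evG _ (imG _ hX1m le_rfl).compl]
      exact measure_mono_null (fun x hx hx1 => hx ⟨x, hx1, rfl⟩) nX1
    · rw [← evH _ (imH _ hY1m le_rfl).compl]
      exact measure_mono_null (fun x hx hx1 => hx ⟨x, hx1, rfl⟩) nY1
  set X2 := X1 ∩ G ⁻¹' S with hX2
  set Y2 := Y1 ∩ H ⁻¹' S with hY2
  have hX2m : MeasurableSet X2 := hX1m.inter (hG hSm)
  have hY2m : MeasurableSet Y2 := hY1m.inter (hH hSm)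
  have nX2 : μ X2ᶜ = 0 := by
    rw [hX2, compl_inter]
    refine measure_union_null nX1 ?_
    rw [← preimage_compl, evG _ hSm.compl, nS]
  have nY2 : ν Y2ᶜ = 0 := by
    rw [hY2, compl_inter]
    refine measure_union_null nY1 ?_
    rw [← preimage_compl, evH _ hSm.compl, nS]
  have := hX2m.standardBorel
  have := hY2m.standardBorel
  have := hX2m.compl.standardBorel
  have := hY2m.compl.standardBorel
  have embG : MeasurableEmbedding (fun x : X2 => G x) :=
    (hG.comp measurable_subtype_coe).measurableEmbedding
      (fun a b h => Subtype.ext (hGi1 a.2.1 b.2.1 h))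
  have embH : MeasurableEmbedding (fun x : Y2 => H x) :=
    (hH.comp measurable_subtype_coe).measurableEmbedding
      (fun a b h => Subtype.ext (hHi1 a.2.1 b.2.1 h))
  have rG : range (fun x : X2 => G x) = S := by
    ext z
    constructor
    · rintro ⟨x, rfl⟩; exact x.2.2
    · intro hz
      obtain ⟨x, hx, rfl⟩ := hz.1
      exact ⟨⟨x, hx, hz⟩, rfl⟩
  have rH : range (fun x : Y2 => H x) = S := by
    ext z
    constructor
    · rintro ⟨x, rfl⟩; exact x.2.2
    · intro hz
      obtain ⟨x, hx, rfl⟩ := hz.2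
      exact ⟨⟨x, hx, hz⟩, rfl⟩
  obtain ⟨e1, he1⟩ := equiv_of_range embG embH (rG.trans rH.symm)
  have cX : ¬ Countable (X2ᶜ : Set X) := fun h =>
    hKc ((countable_coe_iff.1 h).mono (fun x hx => fun (hx2 : x ∈ X2) => hx2.1.2 hx : K ⊆ X2ᶜ))
  have cY : ¬ Countable (Y2ᶜ : Set Y) := fun h =>
    hJc ((countable_coe_iff.1 h).mono (fun x hx => fun (hx2 : x ∈ Y2) => hx2.1.2 hx : J ⊆ Y2ᶜ))
  let e2 : (X2ᶜ : Set X) ≃ᵐ (Y2ᶜ : Set Y) := PolishSpace.measurableEquivOfNotCountable cX cY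
  let e : X ≃ᵐ Y := (MeasurableEquiv.sumCompl hX2m).symm.trans
    ((MeasurableEquiv.sumCongr e1 e2).trans (MeasurableEquiv.sumCompl hY2m))
  have hein : ∀ x (hx : x ∈ X2), e x = e1 ⟨x, hx⟩ := by
    intro x hx
    have : (MeasurableEquiv.sumCompl hX2m).symm x = Sum.inl ⟨x, hx⟩ :=
      Equiv.Set.sumCompl_symm_apply_of_mem hx
    simp only [e, MeasurableEquiv.trans_apply, this]
    rfl
  have hein' : ∀ x ∈ X2, H (e x) = G x := fun x hx => by rw [hein x hx, he1]
  have hemem : ∀ x ∈ X2, e x ∈ Y2 := fun x hx => by rw [hein x hx]; exact (e1 _).2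
  refine ⟨e, e.measurable, ?_⟩
  ext A hA
  rw [Measure.map_apply e.measurable hA]
  set T := H '' (A ∩ Y2) with hT
  have hTm : MeasurableSet T := imH _ (hA.inter hY2m) fun x hx => hx.2.1
  have a1 : μ (e ⁻¹' A) = μ (G ⁻¹' T) := by
    rw [← measure_inter_add_sdiff (e ⁻¹' A) hX2m, ← measure_inter_add_sdiff (G ⁻¹' T) hX2m,
      measure_mono_null (fun x hx => hx.2 : e ⁻¹' A \ X2 ⊆ X2ᶜ) nX2,
      measure_mono_null (fun x hx => hx.2 : (G ⁻¹' T) \ X2 ⊆ X2ᶜ) nX2, add_zero, add_zero]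
    congr 1
    ext x
    simp only [mem_inter_iff, mem_preimage, and_congr_left_iff]
    intro hx
    constructor
    · intro h; exact ⟨e x, ⟨h, hemem x hx⟩, hein' x hx⟩
    · rintro ⟨y, hy, hyx⟩
      rw [← hein' x hx] at hyx
      rw [← hHi1 hy.2.1 (hemem x hx).1 hyx]
      exact hy.1
  have a2 : ν A = ν (H ⁻¹' T) := by
    rw [← measure_inter_add_sdiff A hY2m, ← measure_inter_add_sdiff (H ⁻¹' T) hY2m,
      measure_mono_null (fun x hx => hx.2 : A \ Y2 ⊆ Y2ᶜ) nY2,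
      measure_mono_null (fun x hx => hx.2 : (H ⁻¹' T) \ Y2 ⊆ Y2ᶜ) nY2, add_zero, add_zero]
    congr 1
    ext x
    simp only [mem_inter_iff, mem_preimage, and_congr_left_iff]
    intro hx
    constructor
    · intro h; exact ⟨x, ⟨h, hx⟩, rfl⟩
    · rintro ⟨y, hy, hyx⟩
      rw [← hHi1 hy.2.1 hx.1 hyx]
      exact hy.1
  rw [a1, a2, evG _ hTm, evH _ hTm]

/-- Gluing isomorphisms along the fibres of two finite partitions. -/
lemma exists_iso_fiber {X Y : Type*} [MeasurableSpace X] [StandardBorelSpace X]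
    [MeasurableSpace Y] [StandardBorelSpace Y] (μ : Measure X) (ν : Measure Y)
    [IsProbabilityMeasure μ] [IsProbabilityMeasure ν] (h0 : ∀ x, μ {x} = 0)
    (k0 : ∀ x, ν {x} = 0) (l : ℕ) (a : X → Fin l) (b : Y → Fin l) (ha : Measurable a)
    (hb : Measurable b) (hab : ∀ i, μ (a ⁻¹' {i}) = ν (b ⁻¹' {i}))
    (hpos : ∀ i, μ (a ⁻¹' {i}) ≠ 0) :
    ∃ e : X ≃ᵐ Y, MeasurePreserving e μ ν ∧ ∀ x, b (e x) = a x := by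
  have hsa : ∀ i, MeasurableSet {x | a x = i} := fun i => ha (measurableSet_singleton i)
  have hsb : ∀ i, MeasurableSet {x | b x = i} := fun i => hb (measurableSet_singleton i)
  have step : ∀ i, ∃ e : {x // a x = i} ≃ᵐ {y // b y = i}, ∀ A : Set Y, MeasurableSet A →
      μ (Subtype.val '' (e ⁻¹' (Subtype.val ⁻¹' A))) = ν (A ∩ {y | b y = i}) := by
    intro i
    have : StandardBorelSpace {x // a x = i} := (hsa i).standardBorel
    have : StandardBorelSpace {x // b x = i} := (hsb i).standardBorel
    have ea : MeasurableEmbedding (Subtype.val : {x // a x = i} → X) :=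
      MeasurableEmbedding.subtype_coe (hsa i)
    have eb : MeasurableEmbedding (Subtype.val : {x // b x = i} → Y) :=
      MeasurableEmbedding.subtype_coe (hsb i)
    set M := μ (a ⁻¹' {i}) with hM
    have hMt : M ≠ ⊤ := measure_ne_top _ _
    have hM0 : M ≠ 0 := hpos i
    let μ' := M⁻¹ • μ.comap (Subtype.val : {x // a x = i} → X)
    let ν' := M⁻¹ • ν.comap (Subtype.val : {x // b x = i} → Y)
    have hμ' : ∀ s, μ' s = M⁻¹ * μ (Subtype.val '' s) := fun s => by
      simp only [μ', Measure.smul_apply, ea.comap_apply, smul_eq_mul]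
    have hν' : ∀ s, ν' s = M⁻¹ * ν (Subtype.val '' s) := fun s => by
      simp only [ν', Measure.smul_apply, eb.comap_apply, smul_eq_mul]
    have : IsProbabilityMeasure μ' := ⟨by
      rw [hμ', image_univ, Subtype.range_coe_subtype]
      exact ENNReal.inv_mul_cancel hM0 hMt⟩
    have : IsProbabilityMeasure ν' := ⟨by
      rw [hν', image_univ, Subtype.range_coe_subtype]
      change M⁻¹ * ν (b ⁻¹' {i}) = 1
      rw [← hab]
      exact ENNReal.inv_mul_cancel hM0 hMt⟩
    obtain ⟨e, he⟩ := exists_iso μ' ν' (fun x => by rw [hμ', image_singleton, h0, mul_zero])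
      (fun x => by rw [hν', image_singleton, k0, mul_zero])
    refine ⟨e, fun A hA => ?_⟩
    have h := he.measure_preimage (measurable_subtype_coe hA).nullMeasurableSet
    rw [hμ', hν'] at h
    have h2 := (ENNReal.mul_right_inj (ENNReal.inv_ne_zero.2 hMt) (ENNReal.inv_ne_top.2 hM0)).1 h
    rw [h2]
    congr 1
    ext y
    simp only [mem_image, mem_preimage, Subtype.exists, mem_inter_iff]
    constructor
    · rintro ⟨z, hz, hzA, rfl⟩
      exact ⟨hzA, hz⟩
    · rintro ⟨hy, hyb⟩
      exact ⟨y, hyb, hy, rfl⟩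
  choose E hE using step
  let e0 : X ≃ Y := Equiv.ofFiberEquiv (fun c => (E c).toEquiv)
  have he0 : ∀ x, e0 x = E (a x) ⟨x, rfl⟩ := fun x => rfl
  have he0b : ∀ x, b (e0 x) = a x := fun x => Equiv.ofFiberEquiv_map _ x
  have hpre : ∀ A : Set Y, ∀ i,
      e0 ⁻¹' A ∩ {x | a x = i} = Subtype.val '' (E i ⁻¹' (Subtype.val ⁻¹' A)) := by
    intro A i
    ext x
    constructor
    · rintro ⟨hx, rfl⟩
      exact ⟨⟨x, rfl⟩, hx, rfl⟩
    · rintro ⟨⟨x, rfl⟩, hx, rfl⟩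
      exact ⟨hx, rfl⟩
  have hpre2 : ∀ A : Set X, ∀ i,
      e0.symm ⁻¹' A ∩ {x | b x = i} = Subtype.val '' ((E i).symm ⁻¹' (Subtype.val ⁻¹' A)) := by
    intro A i
    ext y
    obtain ⟨x, rfl⟩ := e0.surjective y
    constructor
    · rintro ⟨hx, hi⟩
      rw [mem_preimage, Equiv.symm_apply_apply] at hx
      have hax : a x = i := (he0b x).symm.trans hi
      subst hax
      exact ⟨E _ ⟨x, rfl⟩, by simpa using hx, rfl⟩
    · rintro ⟨z, hz, hzx⟩
      obtain ⟨⟨w, rfl⟩, rfl⟩ := (E i).surjective z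
      have hw : e0 w = e0 x := hzx
      obtain rfl := e0.injective hw
      refine ⟨?_, he0b w⟩
      simpa using hz
  have hcov : ∀ s : Set X, s = ⋃ i, s ∩ {x | a x = i} := fun s => by ext x; simp
  have hcov2 : ∀ s : Set Y, s = ⋃ i, s ∩ {x | b x = i} := fun s => by ext x; simp
  have m1 : Measurable e0 := by
    intro A hA
    rw [hcov (e0 ⁻¹' A)]
    refine MeasurableSet.iUnion fun i => ?_
    rw [hpre]
    exact (hsa i).subtype_image ((E i).measurable (measurable_subtype_coe hA))
  have m2 : Measurable e0.symm := by
    intro A hA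
    rw [hcov2 (e0.symm ⁻¹' A)]
    refine MeasurableSet.iUnion fun i => ?_
    rw [hpre2]
    exact (hsb i).subtype_image ((E i).symm.measurable (measurable_subtype_coe hA))
  refine ⟨⟨e0, m1, m2⟩, ⟨m1, ?_⟩, he0b⟩
  ext A hA
  change μ.map e0 A = ν A
  rw [Measure.map_apply m1 hA, hcov (e0 ⁻¹' A), hcov2 A, measure_iUnion, measure_iUnion]
  · refine tsum_congr fun i => ?_
    rw [← hcov2, hpre, hE i A hA]
  · intro i j hij
    exact Set.disjoint_left.2 fun x hx hy => hij (hx.2.symm.trans hy.2)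
  · exact fun i => hA.inter (hsb i)
  · intro i j hij
    exact Set.disjoint_left.2 fun x hx hy => hij (hx.2.symm.trans hy.2)
  · intro i
    rw [← hcov2]
    exact (m1 hA).inter (hsa i)

/-- The representative in `[0,1)` of a point of the circle. -/
noncomputable def crep (x : Circle1) : ℝ := (AddCircle.equivIco (1 : ℝ) 0 x : ℝ)

/-- The index of the arc of length `1/N` containing `x`. -/
noncomputable def cfl (N : ℕ) (x : Circle1) : ℕ := ⌊(N : ℝ) * crep x⌋₊

lemma crep_nonneg (x : Circle1) : 0 ≤ crep x := (AddCircle.equivIco (1 : ℝ) 0 x).2.1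

lemma crep_lt_one (x : Circle1) : crep x < 1 := by
  have := (AddCircle.equivIco (1 : ℝ) 0 x).2.2
  exact lt_of_lt_of_eq this (zero_add 1)

lemma crep_coe (x : Circle1) : ((crep x : ℝ) : Circle1) = x :=
  (AddCircle.equivIco (1 : ℝ) 0).symm_apply_apply x

lemma crep_of_mem {z : ℝ} (h0 : 0 ≤ z) (h1 : z < 1) : crep (z : Circle1) = z := by
  rw [crep, AddCircle.coe_equivIco_mk_apply, div_one, mul_one, Int.fract_eq_self.2 ⟨h0, h1⟩]

lemma measurable_crep : Measurable crep :=
  measurable_subtype_coe.comp (AddCircle.measurableEquivIco (1 : ℝ) 0).measurable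

lemma measurable_cfl (N : ℕ) : Measurable (cfl N) :=
  Nat.measurable_floor.comp (measurable_crep.const_mul _)

lemma cfl_lt {N : ℕ} (hN : 0 < N) (x : Circle1) : cfl N x < N := by
  have hN' : (0:ℝ) < N := by exact_mod_cast hN
  rw [cfl, Nat.floor_lt (mul_nonneg hN'.le (crep_nonneg x))]
  nlinarith [crep_lt_one x]

lemma cfl_eq_iff {N : ℕ} (hN : 0 < N) (x : Circle1) (j : ℕ) :
    cfl N x = j ↔ crep x ∈ Ico ((j : ℝ) / N) (((j : ℝ) + 1) / N) := by
  have hN' : (0:ℝ) < N := by exact_mod_cast hN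
  rw [cfl, Nat.floor_eq_iff (mul_nonneg hN'.le (crep_nonneg x)), mem_Ico, div_le_iff₀ hN',
    lt_div_iff₀ hN', mul_comm]

lemma Ico_sub {N j : ℕ} (hj : j < N) :
    Ico ((j : ℝ) / N) (((j : ℝ) + 1) / N) ⊆ Ico 0 1 := by
  have hN' : (0:ℝ) < N := by exact_mod_cast (by omega : 0 < N)
  have : (j : ℝ) + 1 ≤ N := by exact_mod_cast hj
  refine Ico_subset_Ico (by positivity) ?_
  rwa [div_le_one hN']

lemma mem_circleIco_iff {N j : ℕ} (hj : j < N) (x : Circle1) :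
    x ∈ circleIco ((j : ℝ) / N) (((j : ℝ) + 1) / N) ↔ cfl N x = j := by
  rw [cfl_eq_iff (by omega)]
  constructor
  · rintro ⟨z, hz, rfl⟩
    have hz' := Ico_sub hj hz
    change crep (z : Circle1) ∈ _
    rwa [crep_of_mem hz'.1 hz'.2]
  · intro h
    exact ⟨crep x, h, crep_coe x⟩

lemma volume_cfl {N j : ℕ} (hj : j < N) : volume {x : Circle1 | cfl N x = j} = (N : ENNReal)⁻¹ := by
  have hN : 0 < N := by omega
  have hN' : (0:ℝ) < N := by exact_mod_cast hN
  have hm : MeasurableSet {x : Circle1 | cfl N x = j} :=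
    measurable_cfl N (measurableSet_singleton j)
  rw [← (AddCircle.measurePreserving_mk (1 : ℝ) 0).measure_preimage hm.nullMeasurableSet]
  rw [← restrict_Ioo_eq_restrict_Ioc, restrict_Ioo_eq_restrict_Ico, zero_add,
    Measure.restrict_apply ((AddCircle.measurePreserving_mk (1 : ℝ) 0).measurable hm)]
  have : (QuotientAddGroup.mk ⁻¹' {x : Circle1 | cfl N x = j}) ∩ Ico (0:ℝ) 1 =
      Ico ((j : ℝ) / N) (((j : ℝ) + 1) / N) := by
    ext z
    constructor
    · rintro ⟨h, h1⟩
      have h' : cfl N (z : Circle1) = j := h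
      rwa [cfl_eq_iff hN, crep_of_mem h1.1 h1.2] at h'
    · intro h
      have h1 := Ico_sub hj h
      refine ⟨?_, h1⟩
      change cfl N (z : Circle1) = j
      rwa [cfl_eq_iff hN, crep_of_mem h1.1 h1.2]
  rw [this, Real.volume_Ico, ← sub_div, add_sub_cancel_left, one_div,
    ENNReal.ofReal_inv_of_pos hN', ENNReal.ofReal_natCast]

lemma volume_singleton_circle (x : Circle1) : volume ({x} : Set Circle1) = 0 := by
  refine le_antisymm ?_ zero_le
  refine ENNReal.le_of_forall_pos_le_add fun ε hε _ => ?_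
  obtain ⟨n, hn⟩ := ENNReal.exists_inv_nat_lt (a := (ε : ENNReal)) (by simpa using hε.ne')
  have hn0 : 0 < n := by
    rcases Nat.eq_zero_or_pos n with rfl | h
    · simp at hn
    · exact h
  calc volume ({x} : Set Circle1) ≤ volume {y | cfl n y = cfl n x} :=
        measure_mono (by rintro y rfl; rfl)
    _ = (n : ENNReal)⁻¹ := volume_cfl (cfl_lt hn0 x)
    _ ≤ 0 + ε := by rw [zero_add]; exact hn.le

lemma mem_RiemannSet_iff {l n t : ℕ} (hl : 0 < l) (hn : n ∣ l) (ht : t < l / n) (x : Circle1) :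
    x ∈ RiemannSet l n t ↔ cfl l x % (l / n) = t := by
  obtain ⟨m, rfl⟩ := hn
  have hn0 : 0 < n := Nat.pos_of_mul_pos_right hl
  rw [Nat.mul_div_cancel_left _ hn0] at *
  have hm0 : 0 < m := by omega
  have hnR : (n : ℝ) ≠ 0 := by positivity
  have hmR : (m : ℝ) ≠ 0 := by positivity
  have key : ∀ i, i < n → (x ∈ (fun r : ℝ => (r : Circle1)) ''
      Set.Ico ((t : ℝ) / (n * m : ℕ) + (i : ℝ) / n) (((t : ℝ) + 1) / (n * m : ℕ) + (i : ℝ) / n) ↔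
      cfl (n * m) x = t + i * m) := by
    intro i hi
    have hlt : t + i * m < n * m := by nlinarith
    rw [← mem_circleIco_iff hlt, circleIco]
    have e1 : (t : ℝ) / (n * m : ℕ) + (i : ℝ) / n = ((t + i * m : ℕ) : ℝ) / (n * m : ℕ) := by
      push_cast; field_simp
    have e2 : ((t : ℝ) + 1) / (n * m : ℕ) + (i : ℝ) / n =
        (((t + i * m : ℕ) : ℝ) + 1) / (n * m : ℕ) := by
      push_cast; field_simp; ring
    rw [e1, e2]
  simp only [RiemannSet, mem_iUnion, Finset.mem_range, exists_prop]
  constructor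
  · rintro ⟨i, hi, h⟩
    rw [(key i hi).1 h, Nat.add_mul_mod_self_right, Nat.mod_eq_of_lt ht]
  · intro h
    have h1 := cfl_lt hl x
    refine ⟨cfl (n * m) x / m, ?_, ?_⟩
    · exact Nat.div_lt_of_lt_mul (h1.trans_eq (mul_comm _ _))
    · rw [key]
      · rw [← h]; exact (Nat.mod_add_div' _ _).symm
      · exact Nat.div_lt_of_lt_mul (h1.trans_eq (mul_comm _ _))

lemma cfl_succ (p i : ℕ) (hp : 0 < p) (x : Circle1) :
    cfl (p ^ (i + 1)) x / p = cfl (p ^ i) x := by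
  rw [cfl, cfl, ← Nat.floor_div_natCast]
  congr 1
  have : (p : ℝ) ≠ 0 := by positivity
  push_cast
  rw [pow_succ]
  field_simp

/-- The reversed digit expansion. -/
noncomputable def crev (p e : ℕ) (x : Circle1) : ℕ :=
  ∑ i ∈ Finset.range e, p ^ i * (cfl (p ^ (i + 1)) x % p)

lemma crev_lt (p e : ℕ) (hp : 0 < p) (x : Circle1) : crev p e x < p ^ e := by
  induction e with
  | zero => simp [crev]
  | succ e ih =>
    rw [crev, Finset.sum_range_succ, ← crev]
    have := Nat.mod_lt (cfl (p ^ (e + 1)) x) hp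
    have h2 : p ^ e * (cfl (p ^ (e + 1)) x % p) + p ^ e ≤ p ^ e * p := by
      rw [← Nat.mul_succ]; exact Nat.mul_le_mul_left _ this
    rw [← pow_succ] at h2
    omega

lemma crev_eq_iff (p e : ℕ) (hp : 0 < p) (x y : Circle1) :
    crev p e x = crev p e y ↔ cfl (p ^ e) x = cfl (p ^ e) y := by
  induction e with
  | zero =>
    have hx := cfl_lt (N := p ^ 0) (by simp) x
    have hy := cfl_lt (N := p ^ 0) (by simp) y
    simp only [crev, Finset.range_zero, Finset.sum_empty, true_iff]
    rw [pow_zero] at *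
    omega
  | succ e ih =>
    have hx := crev_lt p e hp x
    have hy := crev_lt p e hp y
    have e1 : ∀ x, crev p (e + 1) x = crev p e x + p ^ e * (cfl (p ^ (e + 1)) x % p) := fun x => by
      rw [crev, Finset.sum_range_succ, ← crev]
    have hpe : 0 < p ^ e := by positivity
    constructor
    · intro h
      rw [e1, e1] at h
      have h1 : crev p e x = crev p e y := by
        have := congrArg (· % p ^ e) h
        simpa [Nat.add_mul_mod_self_left, Nat.mod_eq_of_lt hx, Nat.mod_eq_of_lt hy] using this
      rw [h1] at h
      have h2 := Nat.eq_of_mul_eq_mul_left hpe (Nat.add_left_cancel h)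
      have h3 := ih.1 h1
      rw [← cfl_succ p e hp, ← cfl_succ p e hp] at h3
      rw [← Nat.div_add_mod (cfl (p ^ (e + 1)) x) p, h2, h3, Nat.div_add_mod]
    · intro h
      have h3 : cfl (p ^ e) x = cfl (p ^ e) y := by
        rw [← cfl_succ p e hp, ← cfl_succ p e hp, h]
      rw [e1, e1, h, ih.2 h3]

lemma crev_mod (p m e : ℕ) (hme : m ≤ e) (hp : 0 < p) (x : Circle1) :
    crev p e x % p ^ m = crev p m x := by
  induction e, hme using Nat.le_induction with
  | base => exact Nat.mod_eq_of_lt (crev_lt p m hp x)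
  | succ e he ih =>
    rw [crev, Finset.sum_range_succ, ← crev, Nat.add_mod, ih]
    have : p ^ e * (cfl (p ^ (e + 1)) x % p) % p ^ m = 0 :=
      Nat.mod_eq_zero_of_dvd ((pow_dvd_pow p he).mul_right _)
    rw [this, add_zero, Nat.mod_eq_of_lt (crev_lt p m hp x)]

lemma crev_modEq_iff (p m e : ℕ) (hme : m ≤ e) (hp : 0 < p) (x y : Circle1) :
    crev p e x ≡ crev p e y [MOD p ^ m] ↔ cfl (p ^ m) x = cfl (p ^ m) y := by
  rw [Nat.ModEq, crev_mod p m e hme hp, crev_mod p m e hme hp, crev_eq_iff p m hp]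

lemma measurable_crev (p e : ℕ) : Measurable (crev p e) := by
  unfold crev
  refine Finset.measurable_sum _ fun i _ => ?_
  exact (measurable_from_top (f := fun k : ℕ => p ^ i * (k % p))).comp (measurable_cfl _)

lemma nthPrime_prime (k : ℕ) : (nthPrime k).Prime := Nat.prime_nth_prime k

lemma nthPrime_inj : Function.Injective nthPrime := Nat.nth_injective Nat.infinite_setOfPred_prime

lemma lt_nthPrime (k : ℕ) : k < nthPrime k := by
  have := Nat.add_two_le_nth_prime k
  rw [nthPrime]
  omega

lemma prod_nthPrime {l m : ℕ} (hm : m ≠ 0) (hml : m ≤ l) :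
    ∏ k ∈ Finset.range l, nthPrime k ^ m.factorization (nthPrime k) = m := by
  conv_rhs => rw [← Nat.prod_factorization_pow_eq_self hm]
  rw [Finsupp.prod_of_support_subset (s := (Finset.range l).image nthPrime)]
  · rw [Finset.prod_image (fun a _ b _ h => nthPrime_inj h)]
  · intro q hq
    have hq' := Nat.support_factorization m ▸ hq
    have hqp := Nat.prime_of_mem_primeFactors hq'
    have hqm := Nat.le_of_mem_primeFactors hq'
    have hq2 : nthPrime (Nat.count Nat.Prime q) = q := Nat.nth_count hqp
    refine Finset.mem_image.2 ⟨_, Finset.mem_range.2 ?_, hq2⟩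
    have := lt_nthPrime (Nat.count Nat.Prime q)
    omega
  · simp

/-- The index of the rectangle `B_l` containing `y`, arranged so that smaller rectangles
correspond to residue classes. -/
noncomputable def ridx (l : ℕ) (y : Tinf) : ℕ :=
  (∑ k ∈ Finset.range l, crev (nthPrime k) (l.factorization (nthPrime k)) (y k) *
    (l / nthPrime k ^ l.factorization (nthPrime k))) % l

lemma ridx_lt {l : ℕ} (hl : 0 < l) (y : Tinf) : ridx l y < l := Nat.mod_lt _ hl

lemma measurable_ridx (l : ℕ) : Measurable (ridx l) := by
  unfold ridx
  refine (measurable_from_top (f := fun k : ℕ => k % l)).comp ?_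
  refine Finset.measurable_sum _ fun i _ => ?_
  exact ((measurable_crev _ _).comp (measurable_pi_apply i)).mul_const _

lemma ridx_modEq_pow {l : ℕ} (hl : 0 < l) (k e : ℕ) (he : e ≤ l.factorization (nthPrime k))
    (y z : Tinf) : ridx l y ≡ ridx l z [MOD nthPrime k ^ e] ↔
      cfl (nthPrime k ^ e) (y k) = cfl (nthPrime k ^ e) (z k) := by
  have hp := nthPrime_prime k
  set v := fun k => l.factorization (nthPrime k) with hv
  have hdl : nthPrime k ^ e ∣ l := (pow_dvd_pow _ he).trans (Nat.ordProj_dvd l _)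
  by_cases hk : k < l
  · have red : ∀ y, ridx l y ≡ crev (nthPrime k) (v k) (y k) * (l / nthPrime k ^ v k)
        [MOD nthPrime k ^ e] := by
      intro y
      refine ((Nat.mod_modEq _ l).of_dvd hdl).trans ?_
      rw [← Finset.add_sum_erase _ _ (Finset.mem_range.2 hk)]
      have hdvd : nthPrime k ^ e ∣ ∑ j ∈ (Finset.range l).erase k,
          crev (nthPrime j) (l.factorization (nthPrime j)) (y j) *
            (l / nthPrime j ^ l.factorization (nthPrime j)) := by
        refine Finset.dvd_sum fun j hj => Dvd.dvd.mul_left ?_ _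
        have hjk : k ≠ j := (Finset.ne_of_mem_erase hj).symm
        have hcop : Nat.Coprime (nthPrime k ^ e) (nthPrime j ^ l.factorization (nthPrime j)) :=
          Nat.coprime_pow_primes _ _ hp (nthPrime_prime j) (fun h => hjk (nthPrime_inj h))
        refine hcop.dvd_of_dvd_mul_left ?_
        rwa [Nat.ordProj_mul_ordCompl_eq_self]
      have := (Nat.modEq_zero_iff_dvd.2 hdvd).add_left
        (crev (nthPrime k) (v k) (y k) * (l / nthPrime k ^ v k))
      rw [add_zero] at this
      exact this
    have hcop : Nat.Coprime (nthPrime k ^ e) (l / nthPrime k ^ v k) :=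
      (Nat.coprime_ordCompl hp hl.ne').pow_left _
    rw [← crev_modEq_iff _ e (v k) he hp.pos]
    constructor
    · intro h
      exact Nat.ModEq.cancel_right_of_coprime hcop (((red y).symm.trans h).trans (red z))
    · intro h
      exact ((red y).trans (h.mul_right _)).trans (red z).symm
  · have h0 : l.factorization (nthPrime k) = 0 := by
      refine Nat.factorization_eq_zero_of_not_dvd fun h => ?_
      have := Nat.le_of_dvd hl h
      have := lt_nthPrime k
      omega
    have he0 : e = 0 := by omega
    subst he0
    have hx := cfl_lt (N := 1) one_pos (y k)
    have hy := cfl_lt (N := 1) one_pos (z k)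
    rw [pow_zero]
    exact ⟨fun _ => by omega, fun _ => Nat.modEq_one⟩

lemma ridx_modEq {l : ℕ} (hl : 0 < l) (d : ℕ) (L : Fin d → ℕ)
    (hd : (∏ k, nthPrime k.val ^ L k) ∣ l) (y z : Tinf) :
    ridx l y ≡ ridx l z [MOD ∏ k, nthPrime k.val ^ L k] ↔
      ∀ k : Fin d, cfl (nthPrime k ^ L k) (y k) = cfl (nthPrime k ^ L k) (z k) := by
  have hdk : ∀ k : Fin d, nthPrime k.val ^ L k ∣ ∏ k, nthPrime k.val ^ L k := fun k =>
    Finset.dvd_prod_of_mem (fun k : Fin d => nthPrime k.val ^ L k) (Finset.mem_univ k)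
  have hle : ∀ k : Fin d, L k ≤ l.factorization (nthPrime k) := fun k =>
    ((nthPrime_prime k).pow_dvd_iff_le_factorization hl.ne').1 ((hdk k).trans hd)
  constructor
  · intro h k
    exact (ridx_modEq_pow hl k (L k) (hle k) y z).1 (h.of_dvd (hdk k))
  · intro h
    rw [Nat.modEq_iff_dvd]
    push_cast
    refine Fintype.prod_dvd_of_coprime ?_ ?_
    · intro i j hij
      have : Nat.Coprime (nthPrime i ^ L i) (nthPrime j ^ L j) :=
        Nat.coprime_pow_primes _ _ (nthPrime_prime i) (nthPrime_prime j)
          (fun h => hij (Fin.ext (nthPrime_inj h)))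
      have h2 := Nat.isCoprime_iff_coprime.2 this
      push_cast at h2
      exact h2
    · intro k
      have := (Nat.modEq_iff_dvd.1 ((ridx_modEq_pow hl k (L k) (hle k) y z).2 (h k)))
      push_cast at this
      exact this

lemma mem_Rect_iff (d : ℕ) (L j : Fin d → ℕ) (hj : ∀ k, j k < nthPrime k.val ^ L k) (y : Tinf) :
    y ∈ Rect d L j ↔ ∀ k : Fin d, cfl (nthPrime k ^ L k) (y k) = j k := by
  simp only [Rect, mem_ofPred_eq]
  exact forall_congr' fun k => mem_circleIco_iff (hj k) _

lemma ridx_fiber_le (μ : Measure Tinf) (hμ : IsProductLebesgue μ) (l : ℕ) (hl : 0 < l) (t : ℕ) :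
    μ {y | ridx l y = t} ≤ (l : ENNReal)⁻¹ := by
  rcases eq_empty_or_nonempty {y | ridx l y = t} with h | ⟨z, hz⟩
  · rw [h]; simp
  · have hz' : ridx l z = t := hz
    calc μ {y | ridx l y = t} ≤ μ {y | ∀ k ∈ Finset.range l, y k ∈
            {x | cfl (nthPrime k ^ l.factorization (nthPrime k)) x =
              cfl (nthPrime k ^ l.factorization (nthPrime k)) (z k)}} := by
          refine measure_mono fun y hy k _ => ?_
          have hy' : ridx l y = t := hy
          refine (ridx_modEq_pow hl k _ le_rfl y z).1 ?_
          rw [hy', hz']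
      _ = ∏ k ∈ Finset.range l,
            ((nthPrime k ^ l.factorization (nthPrime k) : ℕ) : ENNReal)⁻¹ := by
          rw [hμ.2 _ (fun k => {x | cfl (nthPrime k ^ l.factorization (nthPrime k)) x =
              cfl (nthPrime k ^ l.factorization (nthPrime k)) (z k)})]
          · refine Finset.prod_congr rfl fun k _ => volume_cfl (cfl_lt ?_ _)
            exact pow_pos (nthPrime_prime k).pos _
          · exact fun k => measurable_cfl _ (measurableSet_singleton _)
      _ = (l : ENNReal)⁻¹ := by
          rw [← ENNReal.prod_inv_distrib, ← Nat.cast_prod, prod_nthPrime hl.ne' le_rfl]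
          intro a _ b _ _
          exact Or.inr (by simp)

lemma ridx_fiber (μ : Measure Tinf) (hμ : IsProductLebesgue μ) (l : ℕ) (hl : 0 < l)
    (b : Tinf → Fin l) (hb : ∀ y, (b y : ℕ) = ridx l y) (hbm : Measurable b) (t : Fin l) :
    μ (b ⁻¹' {t}) = (l : ENNReal)⁻¹ := by
  have := hμ.1
  have hle : ∀ t, μ (b ⁻¹' {t}) ≤ (l : ENNReal)⁻¹ := by
    intro t
    refine le_trans (measure_mono ?_) (ridx_fiber_le μ hμ l hl t)
    intro y hy
    have hy' : b y = t := hy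
    change ridx l y = t
    rw [← hb, hy']
  have hsum : ∑ t : Fin l, μ (b ⁻¹' {t}) = 1 := by
    rw [sum_measure_preimage_singleton _ (fun y _ => hbm (measurableSet_singleton y))]
    simp
  have hl0 : (l : ENNReal) ≠ 0 := by exact_mod_cast hl.ne'
  have hlt : (l : ENNReal)⁻¹ ≠ ⊤ := ENNReal.inv_ne_top.2 hl0
  have hsum2 : ∑ t : Fin l, (μ (b ⁻¹' {t})).toReal = ∑ t : Fin l, ((l : ENNReal)⁻¹).toReal := by
    rw [← ENNReal.toReal_sum (fun _ _ => measure_ne_top _ _), hsum]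
    have : (l : ℝ) ≠ 0 := by positivity
    simp [this]
  have h := (Finset.sum_eq_sum_iff_of_le
    (fun t _ => ENNReal.toReal_mono hlt (hle t))).1 hsum2 t (Finset.mem_univ t)
  exact (ENNReal.toReal_eq_toReal_iff' (measure_ne_top _ _) hlt).1 h

/-- **Equivalence of the Riemann maximal function and the rectangle maximal function.**
For every `l` there is a measure-preserving bijection `τ_l : 𝕋 → 𝕋^∞` such that for all
`f ∈ L¹(𝕋)`, setting `g = f ∘ τ_l⁻¹`, the superlevel sets of `ℛ_D^l f` and of
`ℳ_{l/D} g` have equal measures. -/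
theorem riemann_maximal_eq_rect_maximal
    (μ : Measure Tinf) (hμ : IsProductLebesgue μ) (l : ℕ) (hl : 1 ≤ l) :
    ∃ τ : Circle1 → Tinf, Function.Bijective τ ∧
      (∀ A : Set Circle1, MeasurableSet A → μ (τ '' A) = volume A) ∧
      ∀ f : Circle1 → ℝ, Integrable f volume →
        ∀ (D : Set ℕ) (lam : ℝ), 0 < lam →
          volume {x : Circle1 | ENNReal.ofReal lam < RMaxL D l f x} =
            μ {x : Tinf |
              ENNReal.ofReal lam < MMax μ (divSet l D) (f ∘ Function.invFun τ) x} := by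
  have hl0 : 0 < l := hl
  have hμp : IsProbabilityMeasure μ := hμ.1
  have hvp : IsProbabilityMeasure (volume : Measure Circle1) := ⟨UnitAddCircle.measure_univ⟩
  let a : Circle1 → Fin l := fun x => ⟨cfl l x, cfl_lt hl0 x⟩
  let b : Tinf → Fin l := fun y => ⟨ridx l y, ridx_lt hl0 y⟩
  have ham : Measurable a := by
    refine measurable_to_countable' fun i => ?_
    have : a ⁻¹' {i} = cfl l ⁻¹' {(i : ℕ)} := by ext x; simp [a, Fin.ext_iff]
    rw [this]
    exact measurable_cfl l (measurableSet_singleton _)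
  have hbm : Measurable b := by
    refine measurable_to_countable' fun i => ?_
    have : b ⁻¹' {i} = ridx l ⁻¹' {(i : ℕ)} := by ext x; simp [b, Fin.ext_iff]
    rw [this]
    exact measurable_ridx l (measurableSet_singleton _)
  have hva : ∀ i, volume (a ⁻¹' {i}) = (l : ENNReal)⁻¹ := by
    intro i
    have : a ⁻¹' {i} = {x | cfl l x = (i : ℕ)} := by ext x; simp [a, Fin.ext_iff]
    rw [this, volume_cfl i.2]
  have hvb : ∀ i, μ (b ⁻¹' {i}) = (l : ENNReal)⁻¹ :=
    ridx_fiber μ hμ l hl0 b (fun _ => rfl) hbm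
  have hμ0 : ∀ y, μ {y} = 0 := by
    intro y
    refine measure_mono_null (t := {x | ∀ i ∈ ({0} : Finset ℕ), x i ∈ ({y i} : Set Circle1)}) ?_ ?_
    · rintro x rfl
      simp
    · rw [hμ.2 {0} (fun i => {y i}) (fun i => measurableSet_singleton _)]
      simp [volume_singleton_circle]
  obtain ⟨e, he, hab⟩ := exists_iso_fiber (volume : Measure Circle1) μ volume_singleton_circle hμ0
    l a b ham hbm (fun i => (hva i).trans (hvb i).symm)
    (fun i => by rw [hva]; exact ENNReal.inv_ne_zero.2 (ENNReal.natCast_ne_top l))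
  have hidx : ∀ x, ridx l (e x) = cfl l x := fun x => congrArg Fin.val (hab x)
  have hinv : Function.invFun e = e.symm :=
    Function.invFun_eq_of_injective_of_rightInverse e.injective e.apply_symm_apply
  -- correspondence between rectangles and Riemann sets
  have corr : ∀ (d : ℕ) (L j : Fin d → ℕ), (∏ k, nthPrime k.val ^ L k) ∣ l →
      (∀ k, j k < nthPrime k.val ^ L k) → ∀ x, e x ∈ Rect d L j →
      e ⁻¹' Rect d L j = RiemannSet l (l / ∏ k, nthPrime k.val ^ L k)
        (cfl l x % ∏ k, nthPrime k.val ^ L k) := by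
    intro d L j hd hj x hx
    have hdd := Nat.div_div_self hd hl0.ne'
    have hpos : 0 < ∏ k, nthPrime k.val ^ L k := Nat.pos_of_dvd_of_pos hd hl0
    ext z
    rw [mem_preimage, mem_Rect_iff d L j hj, mem_RiemannSet_iff hl0 (Nat.div_dvd_of_dvd hd)
      (by rw [hdd]; exact Nat.mod_lt _ hpos), hdd, ← hidx, ← hidx]
    rw [mem_Rect_iff d L j hj] at hx
    have := ridx_modEq hl0 d L hd (e z) (e x)
    rw [Nat.ModEq] at this
    rw [this]
    exact forall_congr' fun k => by rw [hx k]
  have avg : ∀ (f : Circle1 → ℝ) (B : Set Tinf), (μ B)⁻¹ * ∫⁻ y in B, ‖(f ∘ e.symm) y‖₊ ∂μ =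
      (volume (e ⁻¹' B))⁻¹ * ∫⁻ y in e ⁻¹' B, ‖f y‖₊ ∂volume := by
    intro f B
    rw [he.measure_preimage_equiv,
      ← he.setLIntegral_comp_preimage_emb e.measurableEmbedding]
    simp
  have main : ∀ (f : Circle1 → ℝ) (D : Set ℕ) (x : Circle1),
      MMax μ (divSet l D) (f ∘ e.symm) (e x) = RMaxL D l f x := by
    intro f D x
    refine le_antisymm ?_ ?_
    · refine iSup_le fun d => iSup_le fun L => iSup_le fun j => iSup_le fun hD =>
        iSup_le fun hj => iSup_le fun hx => ?_
      have hpos : 0 < ∏ k, nthPrime k.val ^ L k := Nat.pos_of_dvd_of_pos hD.1 hl0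
      have hdd := Nat.div_div_self hD.1 hl0.ne'
      have hc := corr d L j hD.1 hj x hx
      rw [avg, hc]
      refine le_iSup_of_le (l / ∏ k, nthPrime k.val ^ L k) (le_iSup_of_le hD.2
        (le_iSup_of_le (Nat.div_dvd_of_dvd hD.1) (le_iSup_of_le
          (cfl l x % ∏ k, nthPrime k.val ^ L k) (le_iSup_of_le ?_ (le_iSup_of_le ?_ le_rfl)))))
      · rw [hdd]; exact Nat.mod_lt _ hpos
      · rw [← hc]; exact hx
    · refine iSup_le fun n => iSup_le fun hn => iSup_le fun hnl => iSup_le fun t =>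
        iSup_le fun ht => iSup_le fun hx => ?_
      have hml : l / n ∣ l := Nat.div_dvd_of_dvd hnl
      have hm0 : l / n ≠ 0 := by omega
      have hdd := Nat.div_div_self hnl hl0.ne'
      let L : Fin l → ℕ := fun k => (l / n).factorization (nthPrime k)
      have hL : ∏ k, nthPrime k.val ^ L k = l / n := by
        have := prod_nthPrime hm0 (Nat.le_of_dvd hl0 hml)
        rwa [Finset.prod_range] at this
      let j : Fin l → ℕ := fun k => cfl (nthPrime k ^ L k) (e x k)
      have hj : ∀ k, j k < nthPrime k.val ^ L k := fun k =>
        cfl_lt (pow_pos (nthPrime_prime k).pos _) _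
      have hxR : e x ∈ Rect l L j := (mem_Rect_iff l L j hj _).2 fun k => rfl
      have hc := corr l L j (by rw [hL]; exact hml) hj x hxR
      rw [hL, hdd, (mem_RiemannSet_iff hl0 hnl ht x).1 hx] at hc
      rw [← hc, ← avg]
      have hD : (∏ k, nthPrime k.val ^ L k) ∈ divSet l D := by
        rw [hL]
        exact ⟨hml, by rw [hdd]; exact hn⟩
      exact le_iSup_of_le l (le_iSup_of_le L (le_iSup_of_le j (le_iSup_of_le hD
        (le_iSup_of_le hj (le_iSup_of_le hxR le_rfl)))))
  refine ⟨e, e.bijective, ?_, ?_⟩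
  · intro A _
    rw [← he.measure_preimage_equiv, preimage_image_eq _ e.injective]
  · intro f _ D lam _
    rw [hinv, ← he.measure_preimage_equiv]
    congr 1
    ext x
    simp only [mem_preimage, mem_ofPred_eq, main]
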